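/- For every real α with 0 ≤ α ≤ 1/2 and every ε > 0 there exists x ∈ B^ℕ such that γ̲(x) = γ̄(x) = β̲(x) = β̄(x) = α and h̲(x) = h̄(x) ≤ 2α + ε. -/

import Mathlib

open Filter Topology

/-- The factor of length `len` of the sequence `x` starting at position `i`. -/
def factor (x : ℕ → Bool) (i len : ℕ) : List Bool :=
  List.ofFn (fun j : Fin len => x (i + j))

/-- Number of (possibly overlapping) occurrences of the word `u`
in the prefix `x[0:n)` of the sequence `x`. -/
def occ (x : ℕ → Bool) (n : ℕ) (u : List Bool) : ℕ :=
  ((Finset.range (n + 1 - u.length)).filter (fun i => factor x i u.length = u)).card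

/-- Non-aligned `ℓ`-block entropy of the prefix `x[0:n)`
(logs are base 2, with the convention `0 · log 0 = 0`). -/
noncomputable def hBlock (ℓ : ℕ) (x : ℕ → Bool) (n : ℕ) : ℝ :=
  -(1 / (ℓ : ℝ)) * ∑ u : Fin ℓ → Bool,
    ((occ x n (List.ofFn u) : ℝ) / ((n : ℝ) - ℓ + 1)) *
      Real.logb 2 ((occ x n (List.ofFn u) : ℝ) / ((n : ℝ) - ℓ + 1))

/-- `h̲(x) = lim_{ℓ→∞} liminf_{n→∞} h_ℓ(x[0:n))` (the limit in `ℓ` exists). -/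
noncomputable def hLow (x : ℕ → Bool) : ℝ :=
  atTop.liminf fun ℓ => atTop.liminf fun n => hBlock ℓ x n

/-- `h̄(x) = lim_{ℓ→∞} limsup_{n→∞} h_ℓ(x[0:n))` (the limit in `ℓ` exists). -/
noncomputable def hUp (x : ℕ → Bool) : ℝ :=
  atTop.limsup fun ℓ => atTop.limsup fun n => hBlock ℓ x n

/-- `γ_ℓ(x[0:n))`: normalized minimal number of prediction errors when predicting
`x[i]` from the preceding `ℓ` symbols `x[i-ℓ:i)`, for `i ∈ {ℓ,…,n-1}`. -/
noncomputable def gammaWord (ℓ : ℕ) (x : ℕ → Bool) (n : ℕ) : ℝ :=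
  (1 / ((n : ℝ) - ℓ)) *
    ((Finset.univ : Finset ((Fin ℓ → Bool) → Bool)).inf' Finset.univ_nonempty
      (fun f => ((((Finset.Ico ℓ n).filter
        (fun i => x i ≠ f (fun j => x (i - ℓ + j)))).card : ℝ))))

/-- `β_ℓ(x[0:n))`: normalized minimal number of prediction errors when predicting
`x[i]` from the following `ℓ` symbols `x[i+1:i+ℓ+1)`, for `i ∈ {0,…,n-ℓ-1}`. -/
noncomputable def betaWord (ℓ : ℕ) (x : ℕ → Bool) (n : ℕ) : ℝ :=
  (1 / ((n : ℝ) - ℓ)) *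
    ((Finset.univ : Finset ((Fin ℓ → Bool) → Bool)).inf' Finset.univ_nonempty
      (fun f => ((((Finset.range (n - ℓ)).filter
        (fun i => x i ≠ f (fun j => x (i + 1 + j)))).card : ℝ))))

/-- `γ̲(x) = lim_{ℓ→∞} liminf_{n→∞} γ_ℓ(x[0:n))` (the limit in `ℓ` exists, by monotonicity). -/
noncomputable def gammaLow (x : ℕ → Bool) : ℝ :=
  atTop.liminf fun ℓ => atTop.liminf fun n => gammaWord ℓ x n

/-- `γ̄(x) = lim_{ℓ→∞} limsup_{n→∞} γ_ℓ(x[0:n))` (the limit in `ℓ` exists, by monotonicity). -/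
noncomputable def gammaUp (x : ℕ → Bool) : ℝ :=
  atTop.limsup fun ℓ => atTop.limsup fun n => gammaWord ℓ x n

/-- `β̲(x) = lim_{ℓ→∞} liminf_{n→∞} β_ℓ(x[0:n))` (the limit in `ℓ` exists, by monotonicity). -/
noncomputable def betaLow (x : ℕ → Bool) : ℝ :=
  atTop.liminf fun ℓ => atTop.liminf fun n => betaWord ℓ x n

/-- `β̄(x) = lim_{ℓ→∞} limsup_{n→∞} β_ℓ(x[0:n))` (the limit in `ℓ` exists, by monotonicity). -/
noncomputable def betaUp (x : ℕ → Bool) : ℝ :=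
  atTop.limsup fun ℓ => atTop.limsup fun n => betaWord ℓ x n

/-- Binary Shannon entropy function `H(α) = -α log α - (1-α) log (1-α)` (base-2 logs). -/
noncomputable def binEntropy (a : ℝ) : ℝ :=
  -(a * Real.logb 2 a) - (1 - a) * Real.logb 2 (1 - a)

/-- Conditional block entropy `Hc^{n,ℓ}(x)`:
`-Σ_{ā ∈ B^ℓ, a ∈ B, p(ā·a) > 0} p(ā·a) · log (p(ā·a)/p(ā))`, where
`p(ā) = occ(x[0:n-1), ā)/(n-ℓ)` and `p(ā·a) = occ(x[0:n), ā·a)/(n-ℓ)`. -/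
noncomputable def condEntropy (ℓ : ℕ) (x : ℕ → Bool) (n : ℕ) : ℝ :=
  -∑ u : Fin ℓ → Bool, ∑ a : Bool,
    (if 0 < ((occ x n (List.ofFn u ++ [a]) : ℝ) / ((n : ℝ) - ℓ)) then
      ((occ x n (List.ofFn u ++ [a]) : ℝ) / ((n : ℝ) - ℓ)) *
        Real.logb 2 (((occ x n (List.ofFn u ++ [a]) : ℝ) / ((n : ℝ) - ℓ)) /
          ((occ x (n - 1) (List.ofFn u) : ℝ) / ((n : ℝ) - ℓ)))
    else 0)

/-- The real number in `[0,1]` denoted by the binary sequence `x`. -/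
noncomputable def val (x : ℕ → Bool) : ℝ :=
  ∑' n : ℕ, (if x n then (1 : ℝ) else 0) / 2 ^ (n + 1)

/-!
Minimal prediction errors and block entropies depend only on limiting word frequencies, so it is
enough to find a sequence whose frequencies are those of the mixture of fair coin tossing, with
weight `c = 2 * α`, and the constant sequence `false`. A predictor, forward or backward, then errs
on half of the coin part, at rate `c / 2 = α`, and the block entropies tend to `c`.

Such a sequence can be written down: group blocks of length `k` by `2 ^ k`, and let a proportion `c`
of the groups run through all words of length `k`, the others being zero. For a window of length `ℓ`
at a fixed offset inside a block, every group that runs through all words gives the exact coin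
frequencies; only windows that cross a block boundary, a proportion `ℓ / k`, can spoil them. Letting
`k` grow, with stage `k` occupying `[4 ^ k, 4 ^ (k + 1))`, makes this proportion vanish while the
group length `k * 2 ^ k` stays negligible.
-/

section

open Finset

theorem sum_range_mul {M : Type*} [AddCommMonoid M] (f : ℕ → M) (a b : ℕ) :
    ∑ i ∈ range (a * b), f i = ∑ j ∈ range a, ∑ r ∈ range b, f (j * b + r) := by
  induction a with
  | zero => simp
  | succ a ih => rw [Nat.succ_mul, sum_range_add, ih, sum_range_succ]

theorem sum_range_mul_comp_div {M : Type*} [AddCommMonoid M] (f : ℕ → M) (a b : ℕ) :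
    ∑ i ∈ range (a * b), f (i / b) = b • ∑ j ∈ range a, f j := by
  rw [sum_range_mul, ← sum_nsmul]
  refine sum_congr rfl fun j _ => ?_
  rw [← card_range b, ← sum_const, card_range]
  refine sum_congr rfl fun r hr => ?_
  rw [Nat.add_div_of_dvd_right (Nat.dvd_mul_left b j), Nat.div_eq_of_lt (mem_range.1 hr),
    Nat.mul_div_cancel j (Nat.zero_lt_of_lt (mem_range.1 hr)), add_zero]

theorem sum_range_mul_comp_mod {M : Type*} [AddCommMonoid M] (f : ℕ → M) (a b : ℕ) :
    ∑ i ∈ range (a * b), f (i % b) = a • ∑ r ∈ range b, f r := by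
  rw [sum_range_mul, ← card_range a, ← sum_const, card_range]
  refine sum_congr rfl fun j _ => sum_congr rfl fun r hr => ?_
  rw [Nat.mul_add_mod_self_right, Nat.mod_eq_of_lt (mem_range.1 hr)]

theorem abs_sum_le_card {ι : Type*} {f : ι → ℝ} (hf : ∀ i, |f i| ≤ 1) (s : Finset ι) :
    |∑ i ∈ s, f i| ≤ #s := by
  simpa using norm_sum_le_of_le (f := f) s fun i _ => hf i

theorem sum_range_le_of_tail {g : ℕ → ℝ} {n ℓ : ℕ} {A B : ℝ} (hB : 0 ≤ B)
    (hA : ∀ r, r + ℓ ≤ n → g r ≤ A) (hAB : ∀ r, g r ≤ A + B) :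
    ∑ r ∈ range n, g r ≤ n * A + ℓ * B := by
  have hhead : ∀ r, g r ≤ A + if n < r + ℓ then B else 0 := by
    intro r
    split_ifs with hr
    · exact hAB r
    · simpa using hA r (not_lt.1 hr)
  have htail : (#{r ∈ range n | n < r + ℓ} : ℝ) ≤ ℓ := by
    have : {r ∈ range n | n < r + ℓ} ⊆ Ico (n - ℓ) n := fun r hr => by
      simp only [mem_filter, mem_range, mem_Ico] at hr ⊢
      omega
    have := card_le_card this
    rw [Nat.card_Ico] at this
    exact_mod_cast this.trans (by omega)
  calc ∑ r ∈ range n, g r ≤ ∑ r ∈ range n, (A + if n < r + ℓ then B else 0) :=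
        sum_le_sum fun r _ => hhead r
    _ = n * A + #{r ∈ range n | n < r + ℓ} * B := by
        simp [sum_add_distrib, ← sum_filter]
    _ ≤ n * A + ℓ * B := by gcongr

theorem isLittleO_pow_of_isLittleO_increments {G : ℕ → ℝ} {r : ℝ} (hr : 2 ≤ r)
    (h : (fun k => G (k + 1) - G k) =o[atTop] fun k => r ^ k) :
    G =o[atTop] fun k => r ^ k := by
  have hgeom : ∀ K, ∑ k ∈ range K, r ^ k ≤ r ^ K := fun K => by
    rw [geom_sum_eq (by linarith)]
    exact (div_le_self (by linarith [one_le_pow₀ (n := K) (by linarith : 1 ≤ r)])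
      (by linarith)).trans (by linarith)
  have hdiv : Tendsto (fun K => ∑ k ∈ range K, r ^ k) atTop atTop :=
    tendsto_atTop_mono (fun K => by
      simpa using sum_le_sum fun k (_ : k ∈ range K) =>
        one_le_pow₀ (n := k) (by linarith : 1 ≤ r)) tendsto_natCast_atTop_atTop
  have hsum : (fun K => G K - G 0) =o[atTop] fun K => r ^ K := by
    have := h.sum_range (fun k => by positivity) hdiv
    simp only [sum_range_sub] at this
    refine this.trans_le fun K => ?_
    rw [Real.norm_of_nonneg (by positivity), Real.norm_of_nonneg (by positivity)]
    exact hgeom K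
  have hconst : (fun _ => G 0) =o[atTop] fun K => r ^ K :=
    Asymptotics.isLittleO_const_left.2
      (.inr (tendsto_norm_atTop_atTop.comp (tendsto_pow_atTop_atTop_of_one_lt (by linarith))))
  simpa using hsum.add hconst

theorem isLittleO_natCast_of_geometric_increments {b : ℕ} (hb : 1 < b) {F δ : ℕ → ℝ}
    (hδ : Tendsto δ atTop (𝓝 0))
    (hF : ∀ᶠ k in atTop, ∀ n, b ^ k ≤ n → n ≤ b ^ (k + 1) → |F n - F (b ^ k)| ≤ δ k * n) :
    F =o[atTop] fun n => (n : ℝ) := by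
  have hδ' : δ =o[atTop] fun _ => (1 : ℝ) := (Asymptotics.isLittleO_one_iff ℝ).2 hδ
  have hpowers : (fun k => F (b ^ k)) =o[atTop] fun k => (b : ℝ) ^ k := by
    refine isLittleO_pow_of_isLittleO_increments (mod_cast hb) ?_
    have hbound : (fun k => F (b ^ (k + 1)) - F (b ^ k)) =O[atTop]
        fun k => δ k * (b * (b : ℝ) ^ k) := by
      refine .of_bound' (hF.mono fun k hk => ?_)
      refine ((hk _ (Nat.pow_le_pow_right hb.le (by omega)) le_rfl).trans_eq ?_).trans
        (le_abs_self _)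
      push_cast
      ring
    simpa using hbound.trans_isLittleO
      (hδ'.mul_isBigO (Asymptotics.isBigO_const_mul_self (b : ℝ) (fun k => (b : ℝ) ^ k) atTop))
  have hlog : Tendsto (Nat.log b) atTop atTop := tendsto_atTop.2 fun k =>
    (eventually_ge_atTop (b ^ k)).mono fun n hn => Nat.le_log_of_pow_le hb hn
  have hstart : (fun n => F (b ^ Nat.log b n)) =o[atTop] fun n => (n : ℝ) := by
    refine (hpowers.comp_tendsto hlog).trans_isBigO (.of_bound' ?_)
    filter_upwards [eventually_ne_atTop 0] with n hn
    simpa using (mod_cast Nat.pow_log_le_self b hn : (b : ℝ) ^ Nat.log b n ≤ n)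
  have hrest : (fun n => F n - F (b ^ Nat.log b n)) =o[atTop] fun n => (n : ℝ) := by
    have hbound : (fun n => F n - F (b ^ Nat.log b n)) =O[atTop]
        fun n => δ (Nat.log b n) * (n : ℝ) := by
      refine .of_bound' ?_
      filter_upwards [hlog.eventually hF, eventually_ne_atTop 0] with n hn hn0
      exact (hn n (Nat.pow_log_le_self b hn0) (Nat.lt_pow_succ_log_self hb n).le).trans
        (le_abs_self _)
    simpa using hbound.trans_isLittleO
      ((hδ'.comp_tendsto hlog).mul_isBigO (Asymptotics.isBigO_refl (fun n : ℕ => (n : ℝ)) atTop))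
  simpa using hrest.add hstart

theorem inf'_sum_eq_sum_min {A : Type*} [Fintype A] [DecidableEq A] (g : A → Bool → ℝ) :
    univ.inf' univ_nonempty (fun f : A → Bool => ∑ a, g a (f a)) =
      ∑ a, min (g a false) (g a true) := by
  refine le_antisymm ?_ (le_inf' _ _ fun f _ => sum_le_sum fun a _ => ?_)
  · refine (inf'_le _ (mem_univ fun a => decide (g a true ≤ g a false))).trans_eq ?_
    refine sum_congr rfl fun a _ => ?_
    by_cases h : g a true ≤ g a false
    · simp [h]
    · simp [h, (not_le.1 h).le]
  · cases f a
    exacts [min_le_left _ _, min_le_right _ _]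

theorem inf'_card_ne_eq_sum_min {A : Type*} [Fintype A] [DecidableEq A] (C : ℕ → A)
    (T : ℕ → Bool) (n : ℕ) :
    univ.inf' univ_nonempty (fun f : A → Bool => (#{i ∈ range n | T i ≠ f (C i)} : ℝ)) =
      ∑ a, min (#{i ∈ range n | C i = a ∧ T i = false} : ℝ)
        #{i ∈ range n | C i = a ∧ T i = true} := by
  have herrors (f : A → Bool) : (#{i ∈ range n | T i ≠ f (C i)} : ℝ) =
      ∑ a, (#{i ∈ range n | C i = a ∧ T i = !f a} : ℝ) := by
    rw [card_eq_sum_card_fiberwise (f := C) (t := univ) fun _ _ => by simp]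
    push_cast
    refine sum_congr rfl fun a _ => ?_
    rw [filter_filter]
    congr 2
    refine filter_congr fun i _ => ?_
    rw [and_comm, Bool.eq_not]
    exact and_congr_right fun hi => by rw [hi]
  simp only [herrors]
  rw [inf'_sum_eq_sum_min (fun a b => (#{i ∈ range n | C i = a ∧ T i = !b} : ℝ))]
  exact sum_congr rfl fun a _ => min_comm _ _

theorem tendsto_inf'_card_ne_div {A : Type*} [Fintype A] [DecidableEq A] {C : ℕ → A}
    {T : ℕ → Bool} {p : A → Bool → ℝ}
    (h : ∀ a b, Tendsto (fun n : ℕ => (#{i ∈ range n | C i = a ∧ T i = b} : ℝ) / n) atTop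
      (𝓝 (p a b))) :
    Tendsto (fun n : ℕ => univ.inf' univ_nonempty
        (fun f : A → Bool => (#{i ∈ range n | T i ≠ f (C i)} : ℝ)) / n)
      atTop (𝓝 (∑ a, min (p a false) (p a true))) := by
  simp only [inf'_card_ne_eq_sum_min, sum_div, ← min_div_div_right (Nat.cast_nonneg _)]
  exact tendsto_finsetSum _ fun a _ => (h a false).min (h a true)

theorem liminf_liminf_eq_of_tendsto {ι κ R : Type*} [ConditionallyCompleteLinearOrder R]
    [TopologicalSpace R] [OrderTopology R] {l : Filter ι} {l' : Filter κ} [l.NeBot] [l'.NeBot]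
    {F : ι → κ → R} {a : ι → R} {b : R}
    (hF : ∀ i, Tendsto (F i) l' (𝓝 (a i))) (ha : Tendsto a l (𝓝 b)) :
    (l.liminf fun i => l'.liminf (F i)) = b := by
  simpa only [(hF _).liminf_eq] using ha.liminf_eq

theorem limsup_limsup_eq_of_tendsto {ι κ R : Type*} [ConditionallyCompleteLinearOrder R]
    [TopologicalSpace R] [OrderTopology R] {l : Filter ι} {l' : Filter κ} [l.NeBot] [l'.NeBot]
    {F : ι → κ → R} {a : ι → R} {b : R}
    (hF : ∀ i, Tendsto (F i) l' (𝓝 (a i))) (ha : Tendsto a l (𝓝 b)) :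
    (l.limsup fun i => l'.limsup (F i)) = b := by
  simpa only [(hF _).limsup_eq] using ha.limsup_eq

/-- The factor of length `ℓ` of `x` at position `i`; unlike `factor`, a word is here a function on
`Fin ℓ`, so that words of a given length form a `Fintype`. -/
def window (x : ℕ → Bool) (ℓ i : ℕ) : Fin ℓ → Bool := fun j => x (i + j)

/-- Every word `u` of every length `ℓ` occurs in `x` with limiting frequency `μ ℓ u`. -/
def HasWordFrequencies (x : ℕ → Bool) (μ : (ℓ : ℕ) → (Fin ℓ → Bool) → ℝ) : Prop :=
  ∀ ℓ u, Tendsto (fun n : ℕ => (#{i ∈ range n | window x ℓ i = u} : ℝ) / n) atTop (𝓝 (μ ℓ u))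

/-- The `ℓ`-block entropy of the word frequencies `μ`, per symbol and in bits. -/
noncomputable def blockEntropy (μ : (ℓ : ℕ) → (Fin ℓ → Bool) → ℝ) (ℓ : ℕ) : ℝ :=
  -(1 / (ℓ : ℝ)) * ∑ u, μ ℓ u * Real.logb 2 (μ ℓ u)

theorem continuous_mul_logb (b : ℝ) : Continuous fun t : ℝ => t * Real.logb b t := by
  simpa only [Real.logb, mul_div_assoc] using Real.continuous_mul_log.div_const (Real.log b)

theorem occ_ofFn (x : ℕ → Bool) (n : ℕ) {ℓ : ℕ} (u : Fin ℓ → Bool) :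
    occ x n (List.ofFn u) = #{i ∈ range (n + 1 - ℓ) | window x ℓ i = u} := by
  simp only [occ, factor, List.length_ofFn, List.ofFn_inj]
  congr!

theorem window_succ_eq_snoc_iff (x : ℕ → Bool) (ℓ i : ℕ) (v : Fin ℓ → Bool) (b : Bool) :
    window x (ℓ + 1) i = Fin.snoc (α := fun _ => Bool) v b ↔
      window x ℓ i = v ∧ x (i + ℓ) = b := by
  simp only [funext_iff, Fin.forall_fin_succ', window, Fin.snoc_castSucc, Fin.snoc_last,
    Fin.val_castSucc, Fin.val_last]

theorem window_succ_eq_cons_iff (x : ℕ → Bool) (ℓ i : ℕ) (v : Fin ℓ → Bool) (b : Bool) :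
    window x (ℓ + 1) i = Fin.cons (α := fun _ => Bool) b v ↔
      window x ℓ (i + 1) = v ∧ x i = b := by
  simp only [funext_iff, Fin.forall_fin_succ, window, Fin.cons_zero, Fin.cons_succ, Fin.val_succ,
    Fin.val_zero, add_zero, and_comm, add_assoc, add_comm 1]

theorem gammaWord_add (ℓ : ℕ) (x : ℕ → Bool) (n : ℕ) :
    gammaWord ℓ x (n + ℓ) = univ.inf' univ_nonempty
      (fun f : (Fin ℓ → Bool) → Bool =>
        (#{i ∈ range n | x (i + ℓ) ≠ f (window x ℓ i)} : ℝ)) / n := by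
  have hcard (f : (Fin ℓ → Bool) → Bool) :
      #{i ∈ Ico ℓ (n + ℓ) | x i ≠ f fun j => x (i - ℓ + j)} =
        #{i ∈ range n | x (i + ℓ) ≠ f (window x ℓ i)} := by
    simp only [card_filter, sum_Ico_eq_sum_range, Nat.add_sub_cancel, add_comm ℓ]
    rfl
  simp only [gammaWord, hcard, Nat.cast_add, add_sub_cancel_right, one_div_mul_eq_div]

theorem betaWord_add (ℓ : ℕ) (x : ℕ → Bool) (n : ℕ) :
    betaWord ℓ x (n + ℓ) = univ.inf' univ_nonempty
      (fun f : (Fin ℓ → Bool) → Bool =>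
        (#{i ∈ range n | x i ≠ f (window x ℓ (i + 1))} : ℝ)) / n := by
  simp only [betaWord, Nat.add_sub_cancel, Nat.cast_add, add_sub_cancel_right, one_div_mul_eq_div]
  rfl

namespace HasWordFrequencies

variable {x : ℕ → Bool} {μ : (ℓ : ℕ) → (Fin ℓ → Bool) → ℝ}

theorem tendsto_hBlock (h : HasWordFrequencies x μ) (ℓ : ℕ) :
    Tendsto (hBlock ℓ x) atTop (𝓝 (blockEntropy μ ℓ)) := by
  refine (tendsto_finsetSum _ fun u _ => ((continuous_mul_logb 2).tendsto _).comp ?_).const_mul _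
  rw [← tendsto_add_atTop_iff_nat ℓ]
  refine ((h ℓ u).comp (tendsto_add_atTop_nat 1)).congr fun n => ?_
  rw [Function.comp_apply, occ_ofFn, add_right_comm, Nat.add_sub_cancel]
  push_cast
  rw [add_sub_cancel_right]

theorem tendsto_gammaWord (h : HasWordFrequencies x μ) (ℓ : ℕ) :
    Tendsto (gammaWord ℓ x) atTop (𝓝 (∑ v : Fin ℓ → Bool,
      min (μ (ℓ + 1) (Fin.snoc v false)) (μ (ℓ + 1) (Fin.snoc v true)))) := by
  rw [← tendsto_add_atTop_iff_nat ℓ]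
  simp only [gammaWord_add]
  refine tendsto_inf'_card_ne_div (p := fun v b => μ (ℓ + 1) (Fin.snoc v b)) fun v b => ?_
  simpa only [window_succ_eq_snoc_iff] using h (ℓ + 1) (Fin.snoc v b)

theorem tendsto_betaWord (h : HasWordFrequencies x μ) (ℓ : ℕ) :
    Tendsto (betaWord ℓ x) atTop (𝓝 (∑ v : Fin ℓ → Bool,
      min (μ (ℓ + 1) (Fin.cons false v)) (μ (ℓ + 1) (Fin.cons true v)))) := by
  rw [← tendsto_add_atTop_iff_nat ℓ]
  simp only [betaWord_add]
  refine tendsto_inf'_card_ne_div (p := fun v b => μ (ℓ + 1) (Fin.cons b v)) fun v b => ?_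
  simpa only [window_succ_eq_cons_iff] using h (ℓ + 1) (Fin.cons b v)

end HasWordFrequencies

/-- The word probabilities of the shift-invariant measure giving weight `c` to fair coin tossing and
weight `1 - c` to the constant sequence `false`; `⊥` is the word all of whose letters are
`false`. -/
noncomputable def coinMix (c : ℝ) (ℓ : ℕ) (u : Fin ℓ → Bool) : ℝ :=
  c / 2 ^ ℓ + if u = ⊥ then 1 - c else 0

theorem min_coinMix {c : ℝ} (hc : c ≤ 1) {ℓ : ℕ} {u w : Fin ℓ → Bool} (hw : w ≠ ⊥) :
    min (coinMix c ℓ u) (coinMix c ℓ w) = c / 2 ^ ℓ := by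
  rw [coinMix, coinMix, if_neg hw, add_zero, min_eq_right]
  split_ifs <;> linarith

theorem sum_words_div_two_pow (c : ℝ) (ℓ : ℕ) : ∑ _v : Fin ℓ → Bool, c / 2 ^ (ℓ + 1) = c / 2 := by
  simp [pow_succ]
  field_simp

theorem sum_comp_coinMix (φ : ℝ → ℝ) (c : ℝ) (ℓ : ℕ) :
    ∑ u, φ (coinMix c ℓ u) =
      2 ^ ℓ * φ (c / 2 ^ ℓ) + (φ (c / 2 ^ ℓ + (1 - c)) - φ (c / 2 ^ ℓ)) := by
  have hsplit (u : Fin ℓ → Bool) : φ (coinMix c ℓ u) =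
      φ (c / 2 ^ ℓ) + if u = ⊥ then φ (c / 2 ^ ℓ + (1 - c)) - φ (c / 2 ^ ℓ) else 0 := by
    unfold coinMix
    split_ifs <;> simp
  simp [hsplit, sum_add_distrib]

theorem tendsto_blockEntropy_coinMix (c : ℝ) :
    Tendsto (blockEntropy (coinMix c)) atTop (𝓝 c) := by
  set φ : ℝ → ℝ := fun t => t * Real.logb 2 t
  have hφ : Continuous φ := continuous_mul_logb 2
  have hpow : Tendsto (fun ℓ : ℕ => c / 2 ^ ℓ) atTop (𝓝 0) :=
    tendsto_const_nhds.div_atTop (tendsto_pow_atTop_atTop_of_one_lt one_lt_two)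
  have hcorr : Tendsto (fun ℓ : ℕ =>
      (φ c + (φ (c / 2 ^ ℓ + (1 - c)) - φ (c / 2 ^ ℓ))) / ℓ) atTop (𝓝 0) :=
    ((((hφ.tendsto _).comp (hpow.add_const _)).sub ((hφ.tendsto _).comp hpow)).const_add
      _).div_atTop tendsto_natCast_atTop_atTop
  have huniform (ℓ : ℕ) : 2 ^ ℓ * φ (c / 2 ^ ℓ) = φ c - c * ℓ := by
    rcases eq_or_ne c 0 with rfl | hc
    · simp [φ]
    · simp only [φ, Real.logb_div hc (by positivity : (2 : ℝ) ^ ℓ ≠ 0), Real.logb_pow]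
      field_simp
      simp
  refine (by simpa using hcorr.const_sub c : Tendsto _ atTop (𝓝 c)).congr' ?_
  filter_upwards [eventually_ne_atTop 0] with ℓ hℓ
  have := sum_comp_coinMix φ c ℓ
  rw [blockEntropy, this, huniform]
  field_simp
  ring

namespace HasWordFrequencies

variable {x : ℕ → Bool} {c : ℝ}

theorem tendsto_gammaWord_coinMix (h : HasWordFrequencies x (coinMix c)) (hc : c ≤ 1) (ℓ : ℕ) :
    Tendsto (gammaWord ℓ x) atTop (𝓝 (c / 2)) := by
  have hne (v : Fin ℓ → Bool) : (Fin.snoc v true : Fin (ℓ + 1) → Bool) ≠ ⊥ :=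
    fun h => by simpa using congr_fun h (Fin.last ℓ)
  simpa only [min_coinMix hc (hne _), sum_words_div_two_pow] using h.tendsto_gammaWord ℓ

theorem tendsto_betaWord_coinMix (h : HasWordFrequencies x (coinMix c)) (hc : c ≤ 1) (ℓ : ℕ) :
    Tendsto (betaWord ℓ x) atTop (𝓝 (c / 2)) := by
  have hne (v : Fin ℓ → Bool) : (Fin.cons true v : Fin (ℓ + 1) → Bool) ≠ ⊥ :=
    fun h => by simpa using congr_fun h 0
  simpa only [min_coinMix hc (hne _), sum_words_div_two_pow] using h.tendsto_betaWord ℓ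

end HasWordFrequencies

theorem testBit_window_eq_iff (q r : ℕ) {ℓ : ℕ} (u : Fin ℓ → Bool) :
    (fun j : Fin ℓ => q.testBit (r + j)) = u ↔ q / 2 ^ r % 2 ^ ℓ = Nat.ofBits u := by
  have hbits : Nat.ofBits (fun j : Fin ℓ => q.testBit (r + j)) = q / 2 ^ r % 2 ^ ℓ := by
    simpa only [Nat.testBit_div_two_pow, add_comm r] using Nat.ofBits_testBit (q / 2 ^ r) ℓ
  have hinj : Function.Injective (Nat.ofBits : (Fin ℓ → Bool) → ℕ) := fun v w hvw =>
    funext fun j => by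
      simpa only [Nat.testBit_ofBits_lt _ _ j.2] using congr_arg (Nat.testBit · j) hvw
  rw [← hbits, hinj.eq_iff]

theorem sum_testBit_window_eq {k ℓ r : ℕ} (h : r + ℓ ≤ k) (u : Fin ℓ → Bool) :
    ∑ q ∈ range (2 ^ k), (if (fun j : Fin ℓ => q.testBit (r + j)) = u then 1 else 0 : ℝ) =
      2 ^ k / 2 ^ ℓ := by
  obtain ⟨m, rfl⟩ := Nat.exists_eq_add_of_le h
  have hsplit : 2 ^ (r + ℓ + m) = 2 ^ m * 2 ^ ℓ * 2 ^ r := by ring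
  let F : ℕ → ℝ := fun t => if t = Nat.ofBits u then 1 else 0
  simp only [testBit_window_eq_iff]
  rw [hsplit, sum_range_mul_comp_div (fun t => F (t % 2 ^ ℓ)), sum_range_mul_comp_mod F]
  simp [F, Nat.ofBits_lt_two_pow, pow_add]
  field_simp

theorem coinMix_mem_Icc {c : ℝ} (hc : c ∈ Set.Icc 0 1) {ℓ : ℕ} (u : Fin ℓ → Bool) :
    coinMix c ℓ u ∈ Set.Icc 0 1 := by
  obtain ⟨h0, h1⟩ := hc
  have : c / 2 ^ ℓ ≤ c := div_le_self h0 (one_le_pow₀ one_le_two)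
  have : 0 ≤ c / 2 ^ ℓ := by positivity
  unfold coinMix
  constructor <;> split_ifs <;> linarith

/-- Whether `u` occurs in `x` at position `i`, minus the probability of `u` under `coinMix c`. -/
noncomputable def deviation (x : ℕ → Bool) (c : ℝ) {ℓ : ℕ} (u : Fin ℓ → Bool) (i : ℕ) : ℝ :=
  (if window x ℓ i = u then 1 else 0) - coinMix c ℓ u

theorem abs_deviation_le_one (x : ℕ → Bool) {c : ℝ} (hc : c ∈ Set.Icc 0 1) {ℓ : ℕ}
    (u : Fin ℓ → Bool) (i : ℕ) : |deviation x c u i| ≤ 1 := by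
  obtain ⟨h0, h1⟩ := coinMix_mem_Icc hc u
  unfold deviation
  split_ifs <;> exact abs_sub_le_of_nonneg_of_le (by norm_num) (by norm_num) h0 h1

theorem hasWordFrequencies_coinMix_of_isLittleO {x : ℕ → Bool} {c : ℝ}
    (h : ∀ (ℓ : ℕ) (u : Fin ℓ → Bool),
      (fun n => ∑ i ∈ range n, deviation x c u i) =o[atTop] fun n => (n : ℝ)) :
    HasWordFrequencies x (coinMix c) := by
  intro ℓ u
  refine (by simpa using (h ℓ u).tendsto_div_nhds_zero.add_const (coinMix c ℓ u) :
    Tendsto _ atTop (𝓝 (coinMix c ℓ u))).congr' ?_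
  filter_upwards [eventually_ne_atTop 0] with n hn
  simp only [deviation, sum_sub_distrib, sum_boole, sum_const, card_range, nsmul_eq_mul]
  field_simp
  ring

theorem abs_sum_deviation_sub_le (x y : ℕ → Bool) (c : ℝ) {ℓ : ℕ} (u : Fin ℓ → Bool) {a b : ℕ}
    (hxy : ∀ i, a ≤ i → i < b → x i = y i) :
    |∑ i ∈ Ico a b, deviation x c u i - ∑ i ∈ Ico a b, deviation y c u i| ≤ ℓ := by
  let d : ℕ → ℝ := fun r => |deviation x c u (a + r) - deviation y c u (a + r)|
  have hinside : ∀ r, r + ℓ ≤ b - a → d r ≤ 0 := by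
    intro r hr
    have : window x ℓ (a + r) = window y ℓ (a + r) :=
      funext fun j => hxy _ (by omega) (by omega)
    simp [d, deviation, this]
  have hbound : ∀ r, d r ≤ 0 + 1 := by
    intro r
    simp only [d, deviation, sub_sub_sub_cancel_right]
    split_ifs <;> norm_num
  rw [← sum_sub_distrib, sum_Ico_eq_sum_range]
  calc _ ≤ ∑ r ∈ range (b - a), d r := abs_sum_le_sum_abs _ _
    _ ≤ (b - a : ℕ) * 0 + ℓ * 1 := sum_range_le_of_tail zero_le_one hinside hbound
    _ = ℓ := by ring

/-- The Beatty-type selection of groups of blocks of density `c`, to be filled by a run through all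
binary words: exactly `⌊c * m⌋₊` of the first `m` groups are active. -/
noncomputable def activeGroup (c : ℝ) (s : ℕ) : Bool := decide (⌊c * s⌋₊ < ⌊c * (s + 1)⌋₊)

/-- The sequence copied at stage `k`: positions are cut into blocks of length `k` and blocks into
groups of `2 ^ k`. The `q`-th block of an active group spells the `k` low binary digits of `q`, so
an active group runs through all words of length `k` once; inactive groups are all `false`. -/
noncomputable def stageWord (c : ℝ) (k i : ℕ) : Bool :=
  activeGroup c (i / k / 2 ^ k) && (i / k).testBit (i % k)

/-- The sequence equal to `stageWord c k` on `[4 ^ k, 4 ^ (k + 1))`; its word frequencies are those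
of `coinMix c`. -/
noncomputable def stagedSeq (c : ℝ) (i : ℕ) : Bool := stageWord c (Nat.log 4 i) i

theorem sum_activeGroup {c : ℝ} (hc : c ∈ Set.Icc 0 1) (m : ℕ) :
    ∑ s ∈ range m, (if activeGroup c s then 1 else 0) = ⌊c * m⌋₊ := by
  obtain ⟨h0, h1⟩ := hc
  induction m with
  | zero => simp
  | succ m ih =>
    have hle : ⌊c * m⌋₊ ≤ ⌊c * (m + 1)⌋₊ := by gcongr; linarith
    have hlt : ⌊c * (m + 1)⌋₊ ≤ ⌊c * m⌋₊ + 1 := by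
      rw [← Nat.floor_add_one (by positivity)]
      gcongr
      linarith
    rw [sum_range_succ, ih, activeGroup, Nat.cast_succ]
    split_ifs with h <;> simp only [decide_eq_true_eq] at h <;> omega

theorem abs_sum_activeGroup_sub_le {c : ℝ} (hc : c ∈ Set.Icc 0 1) (m : ℕ) :
    |∑ s ∈ range m, ((if activeGroup c s then 1 else 0) - c)| ≤ 1 := by
  have hsum : ∑ s ∈ range m, ((if activeGroup c s then 1 else 0) - c) = ⌊c * m⌋₊ - c * m := by
    rw [sum_sub_distrib, ← sum_activeGroup hc]
    simp [mul_comm]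
  rw [hsum, abs_le]
  have := Nat.floor_le (mul_nonneg hc.1 m.cast_nonneg)
  have := Nat.lt_floor_add_one (c * m)
  constructor <;> linarith

theorem stageWord_apply (c : ℝ) {k q t : ℕ} (s : ℕ) (hq : q < 2 ^ k) (ht : t < k) :
    stageWord c k ((s * 2 ^ k + q) * k + t) = (activeGroup c s && q.testBit t) := by
  have hdiv : ((s * 2 ^ k + q) * k + t) / k = s * 2 ^ k + q := by
    rw [mul_comm, Nat.mul_add_div (by omega), Nat.div_eq_of_lt ht, add_zero]
  have hdiv' : (s * 2 ^ k + q) / 2 ^ k = s := by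
    rw [mul_comm, Nat.mul_add_div (by positivity), Nat.div_eq_of_lt hq, add_zero]
  rw [stageWord, hdiv, hdiv', Nat.mul_add_mod_self_right, Nat.mod_eq_of_lt ht, mul_comm s,
    Nat.testBit_two_pow_mul_add _ hq, if_pos ht]

theorem sum_deviation_stageWord_group (c : ℝ) {k ℓ r : ℕ} (h : r + ℓ ≤ k) (u : Fin ℓ → Bool)
    (s : ℕ) :
    ∑ q ∈ range (2 ^ k), deviation (stageWord c k) c u ((s * 2 ^ k + q) * k + r) =
      2 ^ k * (((if activeGroup c s then 1 else 0) - c) *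
        (1 / 2 ^ ℓ - if u = ⊥ then 1 else 0)) := by
  have hwindow : ∀ q ∈ range (2 ^ k), window (stageWord c k) ℓ ((s * 2 ^ k + q) * k + r) =
      fun j : Fin ℓ => activeGroup c s && q.testBit (r + j) := fun q hq => funext fun j => by
    rw [window, add_assoc, stageWord_apply c s (mem_range.1 hq) (by omega)]
  have hcount : ∑ q ∈ range (2 ^ k),
      (if (fun j : Fin ℓ => activeGroup c s && q.testBit (r + j)) = u then 1 else 0 : ℝ) =
      2 ^ k * if activeGroup c s then 1 / 2 ^ ℓ else if u = ⊥ then 1 else 0 := by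
    cases activeGroup c s
    · have hzero : (fun _ : Fin ℓ => false) = u ↔ u = ⊥ := eq_comm
      simp [hzero]
    · simpa [div_eq_mul_inv] using sum_testBit_window_eq h u
  simp only [deviation, sum_sub_distrib, sum_const, card_range, nsmul_eq_mul]
  rw [sum_congr rfl fun q hq => by rw [hwindow q hq], hcount]
  push_cast
  rw [coinMix]
  split_ifs <;> ring

theorem abs_sum_deviation_stageWord_offset {c : ℝ} (hc : c ∈ Set.Icc 0 1) {k ℓ r : ℕ}
    (h : r + ℓ ≤ k) (u : Fin ℓ → Bool) (m : ℕ) :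
    |∑ j ∈ range (m * 2 ^ k), deviation (stageWord c k) c u (j * k + r)| ≤ 2 ^ k := by
  have hu : |(1 / 2 ^ ℓ : ℝ) - if u = ⊥ then 1 else 0| ≤ 1 := by
    have : (1 / 2 ^ ℓ : ℝ) ≤ 1 := div_le_self zero_le_one (one_le_pow₀ one_le_two)
    split_ifs <;> exact abs_sub_le_of_nonneg_of_le (by positivity) this (by norm_num) (by norm_num)
  rw [sum_range_mul, sum_congr rfl fun s _ => sum_deviation_stageWord_group c h u s, ← mul_sum,
    ← sum_mul, abs_mul, abs_mul, abs_of_nonneg (by positivity)]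
  exact mul_le_of_le_one_right (by positivity)
    (mul_le_one₀ (abs_sum_activeGroup_sub_le hc m) (abs_nonneg _) hu)

theorem abs_sum_deviation_stageWord_groups {c : ℝ} (hc : c ∈ Set.Icc 0 1) (k : ℕ) {ℓ : ℕ}
    (u : Fin ℓ → Bool) (m : ℕ) :
    |∑ i ∈ range (m * 2 ^ k * k), deviation (stageWord c k) c u i| ≤
      k * 2 ^ k + ℓ * (m * 2 ^ k) := by
  rw [sum_range_mul, sum_comm]
  refine (abs_sum_le_sum_abs _ _).trans
    (sum_range_le_of_tail (by positivity)
      (fun r hr => abs_sum_deviation_stageWord_offset hc hr u m) fun r => ?_)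
  refine (abs_sum_le_card (fun j => abs_deviation_le_one _ hc u _) _).trans ?_
  rw [card_range]
  push_cast
  exact le_add_of_nonneg_left (by positivity)

theorem abs_sum_deviation_stageWord {c : ℝ} (hc : c ∈ Set.Icc 0 1) {k : ℕ} (hk : 0 < k) {ℓ : ℕ}
    (u : Fin ℓ → Bool) (n : ℕ) :
    |∑ i ∈ range n, deviation (stageWord c k) c u i| ≤ ℓ / k * n + 2 * (k * 2 ^ k) := by
  set m := n / (2 ^ k * k)
  set t := n % (2 ^ k * k)
  have hn : n = m * 2 ^ k * k + t := by
    rw [mul_assoc, mul_comm]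
    exact (Nat.div_add_mod _ _).symm
  have ht : (t : ℝ) ≤ k * 2 ^ k := by
    rw [mul_comm]
    exact_mod_cast (Nat.mod_lt n (by positivity)).le
  have hm : ℓ * (m * 2 ^ k) ≤ (ℓ / k * n : ℝ) := by
    have : (m * 2 ^ k * k : ℝ) ≤ n := mod_cast le_of_add_le_left hn.ge
    calc (ℓ * (m * 2 ^ k) : ℝ) = ℓ / k * (m * 2 ^ k * k) := by field_simp
      _ ≤ ℓ / k * n := by gcongr
  have hhead := abs_sum_deviation_stageWord_groups hc k u m
  have htail := abs_sum_le_card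
    (fun i => abs_deviation_le_one (stageWord c k) hc u (m * 2 ^ k * k + i)) (range t)
  rw [card_range] at htail
  conv_lhs => rw [hn, sum_range_add]
  linarith [abs_add_le (∑ i ∈ range (m * 2 ^ k * k), deviation (stageWord c k) c u i)
    (∑ i ∈ range t, deviation (stageWord c k) c u (m * 2 ^ k * k + i))]

theorem stagedSeq_eq_stageWord (c : ℝ) {k i : ℕ} (h : 4 ^ k ≤ i) (h' : i < 4 ^ (k + 1)) :
    stagedSeq c i = stageWord c k i := by
  rw [stagedSeq, Nat.log_eq_of_pow_le_of_lt_pow h h']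

theorem abs_sum_deviation_stagedSeq_increment {c : ℝ} (hc : c ∈ Set.Icc 0 1) {k : ℕ} (hk : 0 < k)
    {ℓ : ℕ} (u : Fin ℓ → Bool) {n : ℕ} (hn : 4 ^ k ≤ n) (hn' : n ≤ 4 ^ (k + 1)) :
    |∑ i ∈ range n, deviation (stagedSeq c) c u i -
        ∑ i ∈ range (4 ^ k), deviation (stagedSeq c) c u i| ≤
      (2 * ℓ / k + 4 * (k * 2 ^ k / 4 ^ k) + ℓ / 4 ^ k) * n := by
  have hstage_n := abs_sum_deviation_stageWord hc hk u n
  have hstage_start := abs_sum_deviation_stageWord hc hk u (4 ^ k)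
  have hagree := abs_sum_deviation_sub_le (stagedSeq c) (stageWord c k) c u (a := 4 ^ k) (b := n)
    fun i hi hi' => stagedSeq_eq_stageWord c hi (hi'.trans_le hn')
  have hn4 : (4 : ℝ) ^ k ≤ n := mod_cast hn
  have hone : 1 ≤ (n : ℝ) / 4 ^ k := (one_le_div (by positivity)).2 hn4
  have hstart : ℓ / k * ((4 ^ k : ℕ) : ℝ) ≤ ℓ / k * n := by gcongr
  have hconst : 4 * (k * 2 ^ k) + ℓ ≤ (4 * (k * 2 ^ k) + ℓ) * ((n : ℝ) / 4 ^ k) :=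
    le_mul_of_one_le_right (by positivity) hone
  have hrhs : (2 * ℓ / k + 4 * (k * 2 ^ k / 4 ^ k) + ℓ / 4 ^ k) * (n : ℝ) =
      2 * (ℓ / k * n) + (4 * (k * 2 ^ k) + ℓ) * (n / 4 ^ k) := by ring
  simp only [sum_Ico_eq_sub _ hn] at hagree
  rw [hrhs]
  rw [abs_le] at *
  constructor <;> linarith

theorem hasWordFrequencies_stagedSeq {c : ℝ} (hc : c ∈ Set.Icc 0 1) :
    HasWordFrequencies (stagedSeq c) (coinMix c) := by
  refine hasWordFrequencies_coinMix_of_isLittleO fun ℓ u => ?_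
  have hdiv : Tendsto (fun k : ℕ => 2 * (ℓ : ℝ) / k) atTop (𝓝 0) :=
    tendsto_const_div_atTop_nhds_zero_nat _
  have hgeom : Tendsto (fun k : ℕ => (k : ℝ) * 2 ^ k / 4 ^ k) atTop (𝓝 0) := by
    have := tendsto_self_mul_const_pow_of_lt_one (r := 2 / 4) (by norm_num) (by norm_num)
    simpa only [div_pow, mul_div_assoc] using this
  have hpow : Tendsto (fun k : ℕ => (ℓ : ℝ) / 4 ^ k) atTop (𝓝 0) :=
    tendsto_const_nhds.div_atTop (tendsto_pow_atTop_atTop_of_one_lt (by norm_num))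
  have hδ := (hdiv.add (hgeom.const_mul 4)).add hpow
  rw [mul_zero, add_zero, add_zero] at hδ
  refine isLittleO_natCast_of_geometric_increments (b := 4) (by norm_num) hδ ?_
  filter_upwards [eventually_gt_atTop 0] with k hk n hn hn'
  exact abs_sum_deviation_stagedSeq_increment hc hk u hn hn'

end

theorem exists_seq_entropy_le_two_alpha_add_eps_general (α : ℝ) (h0 : 0 ≤ α) (h1 : α ≤ 1 / 2) :
    ∃ x : ℕ → Bool,
      gammaLow x = α ∧ gammaUp x = α ∧ betaLow x = α ∧ betaUp x = α ∧
      hLow x = 2 * α ∧ hUp x = 2 * α := by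
  have hle : 2 * α ≤ 1 := by linarith
  have hx := hasWordFrequencies_stagedSeq (c := 2 * α) ⟨by positivity, hle⟩
  have hγ := hx.tendsto_gammaWord_coinMix hle
  have hβ := hx.tendsto_betaWord_coinMix hle
  have hα : Tendsto (fun _ : ℕ => 2 * α / 2) atTop (𝓝 α) := by
    simpa only [mul_div_cancel_left₀ α two_ne_zero] using tendsto_const_nhds
  have hentropy := tendsto_blockEntropy_coinMix (2 * α)
  exact ⟨stagedSeq (2 * α),
    liminf_liminf_eq_of_tendsto hγ hα, limsup_limsup_eq_of_tendsto hγ hα,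
    liminf_liminf_eq_of_tendsto hβ hα, limsup_limsup_eq_of_tendsto hβ hα,
    liminf_liminf_eq_of_tendsto hx.tendsto_hBlock hentropy,
    limsup_limsup_eq_of_tendsto hx.tendsto_hBlock hentropy⟩

theorem exists_seq_entropy_le_two_alpha_add_eps (α : ℝ) (h0 : 0 ≤ α) (h1 : α ≤ 1 / 2)
    (ε : ℝ) (hε : 0 < ε) :
    ∃ x : ℕ → Bool,
      gammaLow x = α ∧ gammaUp x = α ∧ betaLow x = α ∧ betaUp x = α ∧
      hLow x = hUp x ∧ hUp x ≤ 2 * α + ε := by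
  obtain ⟨x, hγl, hγu, hβl, hβu, hl, hu⟩ :=
    exists_seq_entropy_le_two_alpha_add_eps_general α h0 h1
  exact ⟨x, hγl, hγu, hβl, hβu, hl.trans hu.symm, by linarith⟩
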